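/- Work in the max-plus semiring $\mathbb{R}_{\max}=\mathbb{R}\cup\{-\infty\}$ (addition is $\max$, multiplication is $+$), so that $(A\otimes B)_{ij}=\max_k(A_{ik}+B_{kj})$ and $(A\otimes v)_i=\max_j(A_{ij}+v_j)$; $0$ also denotes the zero vector. For a matrix $A$ over $\mathbb{R}_{\max}$ let $\widehat A$ be the matrix with $\widehat A_{ij}=-\infty$ if $A_{ij}=-\infty$ and $\widehat A_{ij}=0$ otherwise. Let $(A(n))_{n\ge 1}$ be a stationary and ergodic sequence of random $d\times d$ matrices with entries in $\mathbb{R}_{\max}$, almost surely having at least one finite entry on each row. Let $(I,J)$ be a partition of $\{1,\dots,d\}$ such that $A_{ij}(n)=-\infty$ almost surely for all $n\ge 1$, $i\in J$, $j\in I$, and write $B(n):=(A_{ij}(n))_{i,j\in I}$ and $D(n):=(A_{ij}(n))_{i\in I,\,j\in J}$. Assume that the directed graph $\mathcal{G}(B)$ with node set $I$ and an arc $(i,j)$ whenever $\mathbb{P}(B_{ij}(1)\neq-\infty)>0$ is strongly connected. Assume moreover that the set $$\mathcal{E}:=\{M\in\{0,-\infty\}^{d\times d} : \exists n\ge 1,\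 \mathbb{P}(\widehat A(1)\otimes\cdots\otimes\widehat A(n)=M)>0\}$$ is a semigroup under max-plus matrix multiplication, and that $\mathbb{P}(D(1)=(-\infty)^{I\times J})<1$. Then $\mathbb{P}(\mathcal{A}_i)=0$ for every $i\in I$, where $$\mathcal{A}_i:=\{\forall n\ge 0,\ (B(1)\otimes\cdots\otimes B(n)\otimes D(n+1)\otimes 0)_i=-\infty\}$$ and the condition for $n=0$ reads $(D(1)\otimes 0)_i=-\infty$. -/

import Mathlib

open MeasureTheory

noncomputable section

/-- Max-plus product of matrices: `(M ⊗ N) i j = max_k (M i k + N k j)`. The semiring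
`ℝ ∪ {-∞}` is encoded in `EReal` with `-∞ = ⊥`; the value `⊤` is excluded by hypothesis. -/
def mpMul {α β γ : Type*} (M : α → β → EReal) (N : β → γ → EReal) : α → γ → EReal :=
  fun i j => ⨆ k, M i k + N k j

/-- Max-plus action of a matrix on a vector: `(M ⊗ v) i = max_j (M i j + v j)`. -/
def mpVec {α β : Type*} (M : α → β → EReal) (v : β → EReal) : α → EReal :=
  fun i => ⨆ j, M i j + v j

open Classical in
/-- The max-plus identity matrix: `0` on the diagonal, `-∞` elsewhere. -/
def mpId {α : Type*} : α → α → EReal :=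
  fun i j => if i = j then 0 else ⊥

/-- `mpProd f n = f 0 ⊗ f 1 ⊗ ⋯ ⊗ f (n-1)`; the empty product is the identity. -/
def mpProd {α : Type*} (f : ℕ → α → α → EReal) : ℕ → α → α → EReal
  | 0 => mpId
  | n + 1 => mpMul (mpProd f n) (f n)

open Classical in
/-- The pattern matrix: `-∞` where `M i j = -∞`, and `0` elsewhere. -/
def mpPattern {α β : Type*} (M : α → β → EReal) : α → β → EReal :=
  fun i j => if M i j = ⊥ then ⊥ else 0

/-- The submatrix of `M` with rows in `S` and columns in `T`. -/
def mpBlock {α β : Type*} (S : Set α) (T : Set β) (M : α → β → EReal) : S → T → EReal :=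
  fun i j => M i j

/-- The (one-sided) sequence `X` of random variables is stationary and ergodic: the left shift
preserves its law on the sequence space, and is ergodic for it. -/
def IsStationaryErgodic {Ω E : Type*} [MeasurableSpace Ω] [MeasurableSpace E]
    (μ : Measure Ω) (X : ℕ → Ω → E) : Prop :=
  Ergodic (fun (x : ℕ → E) (n : ℕ) => x (n + 1)) (μ.map fun ω n => X n ω)

/-- `(i, j)` is an arc of the graph of the random matrix `B`:
the entry `B i j` is different from `-∞` with positive probability. -/
def IsArc {Ω α : Type*} [MeasurableSpace Ω] (μ : Measure Ω) (B : Ω → α → α → EReal)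
    (i j : α) : Prop :=
  0 < μ {ω | B ω i j ≠ ⊥}

/-- A directed graph is strongly connected: there is a path from every node to every node
(a path may be empty, so that a one-node graph is strongly connected). -/
def IsStronglyConnected {α : Type*} (r : α → α → Prop) : Prop :=
  ∀ i j, Relation.ReflTransGen r i j

/-- The set of the matrices that are, for some `n ≥ 1` and with positive probability, equal to
the product of the patterns of the first `n` matrices of the sequence `A`. -/
def patternSet {Ω α : Type*} [MeasurableSpace Ω] (μ : Measure Ω) (A : ℕ → Ω → α → α → EReal) :
    Set (α → α → EReal) :=
  {M | ∃ n : ℕ, 1 ≤ n ∧ 0 < μ {ω | mpProd (fun k => mpPattern (A k ω)) n = M}}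

end

/-!
The semigroup hypothesis synchronises the escapes from `I`. Every arc is finite in some pattern of
`ℰ`, so following a path from a node to `J` gives, for each node, a pattern that leads this node
into `J`. Since patterns of `ℰ` have no empty row and never leave `J`, multiplying them one after
the other, each chosen for the current position of one further node, yields a single pattern that
leads every node into `J`. It is the pattern of a product `A(1) ⊗ ⋯ ⊗ A(N)` with positive
probability, so by ergodicity almost surely some window `A(n+1) ⊗ ⋯ ⊗ A(n+N)` leads every node
into `J`. Wherever a path from `i` stands at time `n`, it can be continued into `J`, and its first
step out of `I` is a finite entry of some `B(1) ⊗ ⋯ ⊗ B(m) ⊗ D(m+1)`.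
-/

section Support

variable {α β γ : Type*}

theorem mpMul_ne_bot_iff {M : α → β → EReal} {N : β → γ → EReal} {i : α} {j : γ} :
    mpMul M N i j ≠ ⊥ ↔ ∃ k, M i k ≠ ⊥ ∧ N k j ≠ ⊥ := by
  simp [mpMul, EReal.add_eq_bot_iff]

theorem mpVec_zero_ne_bot_iff {M : α → β → EReal} {i : α} :
    mpVec M (fun _ => 0) i ≠ ⊥ ↔ ∃ j, M i j ≠ ⊥ := by
  simp [mpVec]

theorem mpId_ne_bot_iff {i j : α} : mpId i j ≠ ⊥ ↔ i = j := by
  by_cases h : i = j <;> simp [mpId, h]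

theorem mpPattern_ne_bot_iff {M : α → β → EReal} {i : α} {j : β} :
    mpPattern M i j ≠ ⊥ ↔ M i j ≠ ⊥ := by
  by_cases h : M i j = ⊥ <;> simp [mpPattern, h]

theorem mpId_mpMul (M : α → β → EReal) : mpMul mpId M = M := by
  funext i j
  refine le_antisymm (iSup_le fun k => ?_) (le_iSup_of_le i (by simp [mpId]))
  by_cases h : i = k <;> simp [mpId, h]

theorem mpProd_one (f : ℕ → α → α → EReal) : mpProd f 1 = f 0 :=
  mpId_mpMul (f 0)

theorem mpProd_mpPattern_ne_bot_iff {f : ℕ → α → α → EReal} {n : ℕ} {i j : α} :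
    mpProd (fun k => mpPattern (f k)) n i j ≠ ⊥ ↔ mpProd f n i j ≠ ⊥ := by
  induction n generalizing j with
  | zero => rfl
  | succ n ih => simp only [mpProd, mpMul_ne_bot_iff, ih, mpPattern_ne_bot_iff]

theorem mpProd_add_ne_bot_iff {f : ℕ → α → α → EReal} {m n : ℕ} {i j : α} :
    mpProd f (m + n) i j ≠ ⊥ ↔
      mpMul (mpProd f m) (mpProd (fun k => f (k + m)) n) i j ≠ ⊥ := by
  induction n generalizing j with
  | zero => simp [mpProd, mpMul_ne_bot_iff, mpId_ne_bot_iff]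
  | succ n ih =>
    simp only [mpMul_ne_bot_iff] at ih
    simp only [mpProd, mpMul_ne_bot_iff, Nat.add_comm n m]
    grind

theorem finite_range_mpPattern [Finite α] [Finite β] :
    (Set.range (mpPattern : (α → β → EReal) → α → β → EReal)).Finite := by
  classical
  refine (Set.finite_range fun (r : α → β → Prop) i j => if r i j then (⊥ : EReal) else 0).subset ?_
  rintro _ ⟨M, rfl⟩
  exact ⟨fun i j => M i j = ⊥, by funext i j; simp [mpPattern]⟩

end Support

section Rows

variable {α β γ : Type*}

/-- The matrix `M` has at least one finite entry on each row. -/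
def HasFiniteRows (M : α → β → EReal) : Prop :=
  ∀ i, ∃ j, M i j ≠ ⊥

/-- The set `J` of nodes is closed in the graph whose arcs are the finite entries of `M`: the block
of `M` with rows in `J` and columns outside `J` is `-∞`. -/
def IsAbsorbing (M : α → α → EReal) (J : Set α) : Prop :=
  ∀ i ∈ J, ∀ j, M i j ≠ ⊥ → j ∈ J

/-- Every row of `M` has a finite entry with column in `J`. For a product of matrices this says
that all nodes can reach `J` simultaneously. -/
def LeadsInto (M : α → β → EReal) (J : Set β) : Prop :=
  ∀ i, ∃ j ∈ J, M i j ≠ ⊥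

protected theorem HasFiniteRows.mpPattern {M : α → β → EReal} (hM : HasFiniteRows M) :
    HasFiniteRows (mpPattern M) := fun i =>
  let ⟨j, hj⟩ := hM i
  ⟨j, mpPattern_ne_bot_iff.2 hj⟩

protected theorem HasFiniteRows.mpMul {M : α → β → EReal} {N : β → γ → EReal}
    (hM : HasFiniteRows M) (hN : HasFiniteRows N) : HasFiniteRows (mpMul M N) := fun i =>
  let ⟨j, hj⟩ := hM i
  let ⟨k, hk⟩ := hN j
  ⟨k, mpMul_ne_bot_iff.2 ⟨j, hj, hk⟩⟩

protected theorem HasFiniteRows.mpProd {f : ℕ → α → α → EReal}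
    (hf : ∀ n, HasFiniteRows (f n)) (n : ℕ) : HasFiniteRows (mpProd f n) := by
  induction n with
  | zero => exact fun i => ⟨i, mpId_ne_bot_iff.2 rfl⟩
  | succ n ih => exact ih.mpMul (hf n)

protected theorem IsAbsorbing.mpPattern {M : α → α → EReal} {J : Set α} (hM : IsAbsorbing M J) :
    IsAbsorbing (mpPattern M) J :=
  fun i hi j hij => hM i hi j (mpPattern_ne_bot_iff.1 hij)

protected theorem IsAbsorbing.mpMul {M N : α → α → EReal} {J : Set α} (hM : IsAbsorbing M J)
    (hN : IsAbsorbing N J) : IsAbsorbing (mpMul M N) J := fun i hi j hij =>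
  let ⟨k, hik, hkj⟩ := mpMul_ne_bot_iff.1 hij
  hN k (hM i hi k hik) j hkj

protected theorem IsAbsorbing.mpProd {f : ℕ → α → α → EReal} {J : Set α}
    (hf : ∀ n, IsAbsorbing (f n) J) (n : ℕ) : IsAbsorbing (mpProd f n) J := by
  induction n with
  | zero => exact fun i hi j hij => mpId_ne_bot_iff.1 hij ▸ hi
  | succ n ih => exact ih.mpMul (hf n)

theorem IsAbsorbing.exists_mem_ne_bot {M : α → α → EReal} {J : Set α} (hM : IsAbsorbing M J)
    (hrow : HasFiniteRows M) {i : α} (hi : i ∈ J) : ∃ j ∈ J, M i j ≠ ⊥ :=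
  let ⟨j, hij⟩ := hrow i
  ⟨j, hM i hi j hij, hij⟩

theorem isAbsorbing_of_isCompl {M : α → α → EReal} {I J : Set α} (hIJ : IsCompl I J)
    (hM : ∀ i ∈ J, ∀ j ∈ I, M i j = ⊥) : IsAbsorbing M J := fun i hi j hij => by
  rw [← hIJ.compl_eq]
  exact fun hj => hij (hM i hi j hj)

theorem HasFiniteRows.leadsInto_mpMul {M : α → β → EReal} {N : β → γ → EReal} {J : Set γ}
    (hM : HasFiniteRows M) (hN : LeadsInto N J) : LeadsInto (mpMul M N) J := fun i =>
  let ⟨j, hij⟩ := hM i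
  let ⟨k, hk, hjk⟩ := hN j
  ⟨k, hk, mpMul_ne_bot_iff.2 ⟨j, hij, hjk⟩⟩

theorem leadsInto_mpProd_mpPattern_iff {f : ℕ → α → α → EReal} {J : Set α} {n : ℕ} :
    LeadsInto (mpProd (fun k => mpPattern (f k)) n) J ↔ LeadsInto (mpProd f n) J := by
  simp only [LeadsInto, mpProd_mpPattern_ne_bot_iff]

theorem leadsInto_mpProd_add {f : ℕ → α → α → EReal} {J : Set α} {m n : ℕ}
    (hm : HasFiniteRows (mpProd f m)) (hn : LeadsInto (mpProd (fun k => f (k + m)) n) J) :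
    LeadsInto (mpProd f (m + n)) J := by
  simpa only [LeadsInto, mpProd_add_ne_bot_iff] using hm.leadsInto_mpMul hn

theorem exists_mem_leadsInto_of_mpMul_mem [Finite α] {E : Set (α → α → EReal)} {J : Set α}
    (hne : E.Nonempty) (hmul : ∀ M ∈ E, ∀ N ∈ E, mpMul M N ∈ E)
    (hrow : ∀ M ∈ E, HasFiniteRows M) (habs : ∀ M ∈ E, IsAbsorbing M J)
    (hreach : ∀ i, ∃ M ∈ E, ∃ j ∈ J, M i j ≠ ⊥) : ∃ M ∈ E, LeadsInto M J := by
  suffices ∀ s : Set α, s.Finite → ∃ M ∈ E, ∀ i ∈ s, ∃ j ∈ J, M i j ≠ ⊥ by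
    simpa [LeadsInto] using this Set.univ Set.finite_univ
  intro s hs
  induction s, hs using Set.Finite.induction_on with
  | empty => exact ⟨hne.some, hne.some_mem, by simp⟩
  | @insert a s _ _ ih =>
    obtain ⟨M, hM, hMs⟩ := ih
    obtain ⟨k, hak⟩ := hrow M hM a
    obtain ⟨N, hN, j, hj, hkj⟩ := hreach k
    refine ⟨mpMul M N, hmul M hM N hN, ?_⟩
    rintro b (rfl | hb)
    · exact ⟨j, hj, mpMul_ne_bot_iff.2 ⟨k, hak, hkj⟩⟩
    · obtain ⟨l, hl, hbl⟩ := hMs b hb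
      obtain ⟨m, hm, hlm⟩ := (habs N hN).exists_mem_ne_bot (hrow N hN) hl
      exact ⟨m, hm, mpMul_ne_bot_iff.2 ⟨l, hbl, hlm⟩⟩

theorem exists_mpVec_mpBlock_ne_bot {f : ℕ → α → α → EReal} {I J : Set α} (hIJ : IsCompl I J)
    {n : ℕ} {i : I} {j : α} (hj : j ∈ J) (hij : mpProd f n i j ≠ ⊥) :
    ∃ m, mpVec (mpMul (mpProd (fun k => mpBlock I I (f k)) m) (mpBlock I J (f m)))
      (fun _ => 0) i ≠ ⊥ := by
  by_contra! hstay
  suffices ∀ n j, mpProd f n i j ≠ ⊥ →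
      ∃ hI : j ∈ I, mpProd (fun k => mpBlock I I (f k)) n i ⟨j, hI⟩ ≠ ⊥ from
    hIJ.disjoint.notMem_of_mem_right hj (this n j hij).1
  intro n
  induction n with
  | zero =>
    intro j hij
    obtain rfl := mpId_ne_bot_iff.1 hij
    exact ⟨i.2, mpId_ne_bot_iff.2 rfl⟩
  | succ n ih =>
    intro j hij
    obtain ⟨k, hik, hkj⟩ := mpMul_ne_bot_iff.1 hij
    obtain ⟨hkI, hik⟩ := ih k hik
    have hjI : j ∈ I := by
      by_contra hjI
      have hjJ : j ∈ J := hIJ.compl_eq ▸ hjI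
      exact mpVec_zero_ne_bot_iff.2
        ⟨⟨j, hjJ⟩, mpMul_ne_bot_iff.2 ⟨⟨k, hkI⟩, hik, hkj⟩⟩ (hstay n)
    exact ⟨hjI, mpMul_ne_bot_iff.2 ⟨⟨k, hkI⟩, hik, hkj⟩⟩

end Rows

theorem ae_exists_iterate_mem_of_ergodic {X : Type*} [MeasurableSpace X] {ν : Measure X}
    [IsFiniteMeasure ν] {T : X → X} (hT : Ergodic T ν) {U : Set X} (hU : NullMeasurableSet U ν)
    (hpos : ν U ≠ 0) : ∀ᵐ x ∂ν, ∃ n, T^[n] x ∈ U := by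
  let V : Set X := ⋃ n, T^[n] ⁻¹' U
  have hV : NullMeasurableSet V ν := .iUnion fun n =>
    hU.preimage (hT.toMeasurePreserving.iterate n).quasiMeasurePreserving
  have hTV : T ⁻¹' V ⊆ V := fun x hx =>
    let ⟨n, hn⟩ := Set.mem_iUnion.1 hx
    Set.mem_iUnion.2 ⟨n + 1, hn⟩
  have hUV : U ⊆ V := Set.subset_iUnion (fun n => T^[n] ⁻¹' U) 0
  rcases hT.ae_empty_or_univ_of_preimage_ae_le hV hTV.eventuallyLE
    with hempty | huniv
  · exact absurd (measure_mono_null hUV (ae_eq_empty.1 hempty)) hpos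
  · filter_upwards [Filter.eventuallyEq_univ.1 huniv] with x hx
    exact Set.mem_iUnion.1 hx

theorem iterate_shift {E : Type*} (x : ℕ → E) (n : ℕ) :
    (fun (y : ℕ → E) k => y (k + 1))^[n] x = fun k => x (k + n) := by
  induction n generalizing x with
  | zero => rfl
  | succ n ih => rw [Function.iterate_succ_apply, ih]; rfl

theorem IsStationaryErgodic.ae_exists_shift_mem {Ω E : Type*} [MeasurableSpace Ω]
    [MeasurableSpace E] {μ : Measure Ω} [IsFiniteMeasure μ] {X : ℕ → Ω → E}
    (hX : ∀ n, AEMeasurable (X n) μ) (herg : IsStationaryErgodic μ X) {U : Set (ℕ → E)}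
    (hU : MeasurableSet U) (hpos : 0 < μ {ω | (fun n => X n ω) ∈ U}) :
    ∀ᵐ ω ∂μ, ∃ n, (fun k => X (k + n) ω) ∈ U := by
  have hmeas : AEMeasurable (fun ω n => X n ω) μ := aemeasurable_pi_lambda _ hX
  have hmap : μ.map (fun ω n => X n ω) U ≠ 0 := by
    rw [Measure.map_apply_of_aemeasurable hmeas hU]
    exact hpos.ne'
  have := Measure.isFiniteMeasure_map μ fun ω n => X n ω
  simpa only [iterate_shift] using
    ae_of_ae_map hmeas (ae_exists_iterate_mem_of_ergodic herg hU.nullMeasurableSet hmap)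

section RandomMatrices

theorem measurable_mpProd_apply {α : Type*} [Countable α] (n : ℕ) (i j : α) :
    Measurable fun f : ℕ → α → α → EReal => mpProd f n i j := by
  induction n generalizing j with
  | zero => exact measurable_const
  | succ n ih => exact Measurable.iSup fun k => (ih k).add (by fun_prop)

theorem measurableSet_leadsInto_mpProd {α : Type*} [Countable α] (n : ℕ) (J : Set α) :
    MeasurableSet {f : ℕ → α → α → EReal | LeadsInto (mpProd f n) J} := by
  have hentry (i j : α) : MeasurableSet {f : ℕ → α → α → EReal | mpProd f n i j ≠ ⊥} :=
    measurable_mpProd_apply n i j (measurableSet_singleton ⊥).compl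
  exact measurableSet_setOfPred.2 <| .forall fun i => .exists fun j =>
    measurable_const.and (measurableSet_setOfPred.1 (hentry i j))

variable {Ω α : Type*} [MeasurableSpace Ω] {μ : Measure Ω} {A : ℕ → Ω → α → α → EReal}

theorem of_mem_patternSet_of_ae {P : (α → α → EReal) → Prop}
    (hP : ∀ᵐ ω ∂μ, ∀ n, P (mpProd (fun k => mpPattern (A k ω)) n)) {M : α → α → EReal}
    (hM : M ∈ patternSet μ A) : P M := by
  obtain ⟨n, -, hn⟩ := hM
  obtain ⟨ω, rfl, hω⟩ := ((frequently_ae_iff.2 hn.ne').and_eventually hP).exists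
  exact hω n

theorem hasFiniteRows_of_mem_patternSet (hrow : ∀ n, ∀ᵐ ω ∂μ, HasFiniteRows (A n ω))
    {M : α → α → EReal} (hM : M ∈ patternSet μ A) : HasFiniteRows M := by
  refine of_mem_patternSet_of_ae ?_ hM
  filter_upwards [ae_all_iff.2 hrow] with ω hω
  exact HasFiniteRows.mpProd fun k => (hω k).mpPattern

theorem isAbsorbing_of_mem_patternSet {J : Set α}
    (habs : ∀ n, ∀ᵐ ω ∂μ, IsAbsorbing (A n ω) J) {M : α → α → EReal}
    (hM : M ∈ patternSet μ A) : IsAbsorbing M J := by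
  refine of_mem_patternSet_of_ae (P := (IsAbsorbing · J)) ?_ hM
  filter_upwards [ae_all_iff.2 habs] with ω hω
  exact IsAbsorbing.mpProd fun k => (hω k).mpPattern

theorem exists_mem_patternSet_of_measure_pos [Finite α] {P : (α → α → EReal) → Prop}
    (hpos : 0 < μ {ω | P (mpPattern (A 0 ω))}) : ∃ M ∈ patternSet μ A, P M := by
  have := (finite_range_mpPattern (α := α) (β := α)).to_subtype
  have hcover : {ω | P (mpPattern (A 0 ω))} ⊆
      ⋃ M : Set.range (mpPattern : (α → α → EReal) → _),
        {ω | mpPattern (A 0 ω) = M ∧ P M} :=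
    fun ω hω => Set.mem_iUnion.2 ⟨⟨_, A 0 ω, rfl⟩, rfl, hω⟩
  obtain ⟨M, hM⟩ :=
    exists_measure_pos_of_not_measure_iUnion_null (hpos.trans_le (measure_mono hcover)).ne'
  obtain ⟨-, -, hPM⟩ := nonempty_of_measure_ne_zero hM.ne'
  refine ⟨M, ⟨1, le_rfl, hM.trans_le (measure_mono fun ω hω => ?_)⟩, hPM⟩
  exact (mpProd_one fun k => mpPattern (A k ω)).trans hω.1

theorem patternSet_nonempty [Finite α] [NeZero μ] : (patternSet μ A).Nonempty :=
  let ⟨M, hM, _⟩ := exists_mem_patternSet_of_measure_pos (P := fun _ => True) (A := A) <| by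
    simpa using NeZero.pos (μ Set.univ)
  ⟨M, hM⟩

theorem IsArc.exists_mem_patternSet_ne_bot [Finite α] {i j : α} (hij : IsArc μ (A 0) i j) :
    ∃ M ∈ patternSet μ A, M i j ≠ ⊥ :=
  exists_mem_patternSet_of_measure_pos (P := fun M => M i j ≠ ⊥) <| by
    simpa only [IsArc, mpPattern_ne_bot_iff] using hij

theorem exists_mem_patternSet_ne_bot_of_reflTransGen [Finite α] [NeZero μ] {J : Set α}
    (hrow : ∀ n, ∀ᵐ ω ∂μ, HasFiniteRows (A n ω))
    (habs : ∀ n, ∀ᵐ ω ∂μ, IsAbsorbing (A n ω) J)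
    (hsemi : ∀ M ∈ patternSet μ A, ∀ N ∈ patternSet μ A, mpMul M N ∈ patternSet μ A)
    {i j : α} (hj : j ∈ J) (hij : Relation.ReflTransGen (IsArc μ (A 0)) i j) :
    ∃ M ∈ patternSet μ A, ∃ k ∈ J, M i k ≠ ⊥ := by
  induction hij using Relation.ReflTransGen.head_induction_on with
  | refl =>
    obtain ⟨M, hM⟩ := patternSet_nonempty (μ := μ) (A := A)
    exact ⟨M, hM, (isAbsorbing_of_mem_patternSet habs hM).exists_mem_ne_bot
      (hasFiniteRows_of_mem_patternSet hrow hM) hj⟩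
  | @head i l hil _ ih =>
    obtain ⟨M, hM, hMil⟩ := hil.exists_mem_patternSet_ne_bot
    obtain ⟨N, hN, k, hk, hNlk⟩ := ih
    exact ⟨mpMul M N, hsemi M hM N hN, k, hk, mpMul_ne_bot_iff.2 ⟨l, hMil, hNlk⟩⟩

theorem ae_exists_leadsInto_mpProd_of_mem_patternSet [Countable α] [IsFiniteMeasure μ] {J : Set α}
    (hA : ∀ n, AEMeasurable (A n) μ) (herg : IsStationaryErgodic μ A)
    (hrow : ∀ n, ∀ᵐ ω ∂μ, HasFiniteRows (A n ω)) {M : α → α → EReal} (hM : M ∈ patternSet μ A)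
    (hMJ : LeadsInto M J) : ∀ᵐ ω ∂μ, ∃ n, LeadsInto (mpProd (fun k => A k ω) n) J := by
  obtain ⟨N, -, hN⟩ := hM
  have hpos : 0 < μ {ω | LeadsInto (mpProd (fun k => A k ω) N) J} := by
    refine hN.trans_le (measure_mono fun ω hω => leadsInto_mpProd_mpPattern_iff.1 ?_)
    rwa [show mpProd (fun k => mpPattern (A k ω)) N = M from hω]
  filter_upwards [ae_all_iff.2 hrow,
    herg.ae_exists_shift_mem hA (measurableSet_leadsInto_mpProd N J) hpos] with ω hω ⟨n, hn⟩
  exact ⟨n + N, leadsInto_mpProd_add (HasFiniteRows.mpProd hω n) hn⟩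

theorem exists_isArc_of_measure_mpBlock_eq_bot_lt_one [Countable α] [IsProbabilityMeasure μ]
    {B : Ω → α → α → EReal} {I J : Set α}
    (hD : μ {ω | mpBlock I J (B ω) = fun _ _ => ⊥} < 1) : ∃ i ∈ I, ∃ j ∈ J, IsArc μ B i j := by
  by_contra! hno
  have hbot : ∀ᵐ ω ∂μ, mpBlock I J (B ω) = fun _ _ => ⊥ := by
    have hentry : ∀ᵐ ω ∂μ, ∀ (i : I) (j : J), B ω i j = ⊥ := ae_all_iff.2 fun i =>
      ae_all_iff.2 fun j => ae_iff.2 (nonpos_iff_eq_zero.1 (not_lt.1 (hno i i.2 j j.2)))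
    filter_upwards [hentry] with ω hω
    exact funext₂ hω
  exact hD.ne ((measure_congr (Filter.eventuallyEq_univ.2 hbot)).trans measure_univ)

theorem exists_mem_reflTransGen_isArc [Countable α] [IsProbabilityMeasure μ]
    {B : Ω → α → α → EReal} {I J : Set α} (hcover : I ∪ J = Set.univ)
    (hconn : IsStronglyConnected (IsArc μ fun ω => mpBlock I I (B ω)))
    (hD : μ {ω | mpBlock I J (B ω) = fun _ _ => ⊥} < 1) (i : α) :
    ∃ j ∈ J, Relation.ReflTransGen (IsArc μ B) i j := by
  rcases (hcover ▸ Set.mem_univ i : i ∈ I ∪ J) with hi | hi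
  · obtain ⟨p, hp, q, hq, hpq⟩ := exists_isArc_of_measure_mpBlock_eq_bot_lt_one hD
    have hip : Relation.ReflTransGen (IsArc μ B) i p :=
      Relation.ReflTransGen.lift (p := IsArc μ B) ((↑) : I → α) (fun _ _ harc => harc) _ _
        (hconn ⟨i, hi⟩ ⟨p, hp⟩)
    exact ⟨q, hq, hip.tail hpq⟩
  · exact ⟨i, hi, .refl⟩

end RandomMatrices

theorem block_lemma_part_two_general
    {α Ω : Type*} [Finite α] [MeasurableSpace Ω] (μ : Measure Ω) [IsProbabilityMeasure μ]
    (A : ℕ → Ω → α → α → EReal) (hA : ∀ n, AEMeasurable (A n) μ)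
    (herg : IsStationaryErgodic μ A)
    (hrow : ∀ n, ∀ᵐ ω ∂μ, ∀ i, ∃ j, A n ω i j ≠ ⊥)
    (I J : Set α) (hIJ : IsCompl I J)
    (hblock : ∀ n, ∀ᵐ ω ∂μ, ∀ i ∈ J, ∀ j ∈ I, A n ω i j = ⊥)
    (hreach : ∀ i, ∃ j ∈ J, Relation.ReflTransGen (IsArc μ (A 0)) i j)
    (hsemi : ∀ M ∈ patternSet μ A, ∀ N ∈ patternSet μ A, mpMul M N ∈ patternSet μ A)
    (i : I) :
    μ {ω | ∀ n : ℕ,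
      mpVec (mpMul (mpProd (fun k => mpBlock I I (A k ω)) n) (mpBlock I J (A n ω)))
        (fun _ => 0) i = ⊥} = 0 := by
  have habs (n : ℕ) : ∀ᵐ ω ∂μ, IsAbsorbing (A n ω) J :=
    (hblock n).mono fun _ => isAbsorbing_of_isCompl hIJ
  obtain ⟨M, hM, hMJ⟩ : ∃ M ∈ patternSet μ A, LeadsInto M J :=
    exists_mem_leadsInto_of_mpMul_mem patternSet_nonempty hsemi
      (fun _ => hasFiniteRows_of_mem_patternSet hrow)
      (fun _ => isAbsorbing_of_mem_patternSet habs) fun a =>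
        let ⟨_, hj, haj⟩ := hreach a
        exists_mem_patternSet_ne_bot_of_reflTransGen hrow habs hsemi hj haj
  refine measure_eq_zero_iff_ae_notMem.2 ?_
  filter_upwards [ae_exists_leadsInto_mpProd_of_mem_patternSet hA herg hrow hM hMJ]
    with ω ⟨n, hn⟩ hstay
  obtain ⟨j, hj, hij⟩ := hn i
  obtain ⟨m, hm⟩ := exists_mpVec_mpBlock_ne_bot hIJ hj hij
  exact hm (hstay m)

/-- The sequence `A(1), A(2), …` is indexed from `0`: `A k` stands for `A(k+1)`. So
`mpProd (fun k => mpBlock I I (A k ω)) n` is `B(1) ⊗ ⋯ ⊗ B(n)`, the identity for `n = 0`,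
and `mpBlock I J (A n ω)` is `D(n+1)`. -/
theorem block_lemma_part_two
    {d : ℕ} {Ω : Type*} [MeasurableSpace Ω] (μ : Measure Ω) [IsProbabilityMeasure μ]
    (A : ℕ → Ω → Fin d → Fin d → EReal) (hA : ∀ n, Measurable (A n))
    (hnotop : ∀ n ω i j, A n ω i j ≠ ⊤)
    (herg : IsStationaryErgodic μ A)
    (hrow : ∀ n, ∀ᵐ ω ∂μ, ∀ i, ∃ j, A n ω i j ≠ ⊥)
    (I J : Set (Fin d)) (hdisj : Disjoint I J) (hcover : I ∪ J = Set.univ)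
    (hblock : ∀ n, ∀ᵐ ω ∂μ, ∀ i ∈ J, ∀ j ∈ I, A n ω i j = ⊥)
    (hconn : IsStronglyConnected (IsArc μ fun ω => mpBlock I I (A 0 ω)))
    (hsemi : ∀ M ∈ patternSet μ A, ∀ N ∈ patternSet μ A, mpMul M N ∈ patternSet μ A)
    (hD : μ {ω | mpBlock I J (A 0 ω) = fun _ _ => ⊥} < 1)
    (i : I) :
    μ {ω | ∀ n : ℕ,
      mpVec (mpMul (mpProd (fun k => mpBlock I I (A k ω)) n) (mpBlock I J (A n ω)))
        (fun _ => 0) i = ⊥} = 0 :=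
  block_lemma_part_two_general μ A (fun n => (hA n).aemeasurable) herg hrow I J
    ⟨hdisj, codisjoint_iff.2 hcover⟩ hblock (exists_mem_reflTransGen_isArc hcover hconn hD) hsemi i
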